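/- Consider the thresholding model selection method with deterministic τ = τ_n → 0: coordinate i is selected as a signal if and only if κ_i(τ) = θ̂_i(τ)/Y_i > 1/2. Suppose k_S > 0, k_M < 1, k_L > 1, f_τ ↑ ∞ as τ → 0, and let γ_n → c with 0 ≤ c ≤ 1/2 and ζ_{γ_n} = o(ζ_τ). Then with probability tending to one at least a fraction 1 − 2γ_n of the coordinates with θ_{0,i} = 0 are not selected; with probability tending to one at least a fraction 1 − γ_n of the signals in L = {i : |θ_{0,i}| ≥ k_L ζ_τ} are selected; and every nonzero signal θ_{0,i} in S ∪ M, where S = {i : |θ_{0,i}| ≤ k_S τ} and M = {i : f_τ τ ≤ |θ_{0,i}| ≤ k_M ζ_τ}, is not selected with probability tending to one. -/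

import Mathlib

open MeasureTheory ProbabilityTheory Filter Set Real Asymptotics
open scoped ENNReal NNReal BigOperators

noncomputable section

/-- Standard normal density `φ`. -/
def phiN (x : ℝ) : ℝ := (Real.sqrt (2 * Real.pi))⁻¹ * Real.exp (-(x ^ 2) / 2)

/-- Horseshoe prior density with global parameter `τ`. -/
def gHS (τ θ : ℝ) : ℝ :=
  ∫ l in Set.Ioi (0 : ℝ), phiN (θ / (l * τ)) / (l * τ) * (2 / (Real.pi * (1 + l ^ 2)))

/-- Unnormalised marginal posterior density of `θᵢ` given `Yᵢ = y` (parameter `τ`). -/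
def postDens (τ y θ : ℝ) : ℝ := phiN (y - θ) * gHS τ θ

/-- Bayesian marginal density `ψ_τ(y)` of one observation. -/
def margDens (τ y : ℝ) : ℝ := ∫ θ, postDens τ y θ

/-- Marginal posterior probability `Π(θᵢ ∈ A | Yᵢ = y, τ)`. -/
def postProb (τ y : ℝ) (A : Set ℝ) : ℝ := (∫ θ in A, postDens τ y θ) / margDens τ y

/-- Marginal posterior mean `θ̂ᵢ(τ)`. -/
def postMean (τ y : ℝ) : ℝ := (∫ θ, θ * postDens τ y θ) / margDens τ y

/-- Marginal posterior variance. -/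
def postVar (τ y : ℝ) : ℝ :=
  (∫ θ, (θ - postMean τ y) ^ 2 * postDens τ y θ) / margDens τ y

/-- Marginal posterior fourth central moment. -/
def postMom4 (τ y : ℝ) : ℝ :=
  (∫ θ, (θ - postMean τ y) ^ 4 * postDens τ y θ) / margDens τ y

/-- `ζ_τ = √(2 log (1/τ))`. -/
def zet (τ : ℝ) : ℝ := Real.sqrt (2 * Real.log (1 / τ))

/-- `τ_n(p) = (p/n) √(log (n/p))`. -/
def tauOpt (n p : ℕ) : ℝ := ((p : ℝ) / (n : ℝ)) * Real.sqrt (Real.log ((n : ℝ) / (p : ℝ)))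

/-- The law `P_{θ₀}` of `Y^n`. -/
def Pdata {n : ℕ} (θ₀ : Fin n → ℝ) : Measure (Fin n → ℝ) :=
  Measure.pi fun i => gaussianReal (θ₀ i) 1

/-- The standard normal upper `α`-quantile `z_α`. -/
def zquant (α : ℝ) : ℝ := sInf {z : ℝ | ((gaussianReal 0 1) (Set.Ioi z)).toReal ≤ α}

/-- Nearly black vectors `ℓ₀[p]`. -/
def nearlyBlack (n p : ℕ) : Set (Fin n → ℝ) :=
  {θ | ({i | θ i ≠ 0} : Set (Fin n)).ncard ≤ p}

/-- Unnormalised posterior density of the full vector `θ` given `Y^n = y` and `τ`. -/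
def fullDens {n : ℕ} (τ : ℝ) (y θ : Fin n → ℝ) : ℝ := ∏ i, postDens τ (y i) (θ i)

/-- Posterior probability `Π(θ ∈ A | Y^n = y, τ)` of a set of vectors. -/
def fullPostProb {n : ℕ} (τ : ℝ) (y : Fin n → ℝ) (A : Set (Fin n → ℝ)) : ℝ :=
  (∫ θ in A, fullDens τ y θ) / ∫ θ, fullDens τ y θ

/-- Posterior mean of the full vector (coordinatewise, by conditional independence). -/
def fullPostMean {n : ℕ} (τ : ℝ) (y : Fin n → ℝ) : Fin n → ℝ := fun i => postMean τ (y i)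

/-- Euclidean distance on `ℝⁿ`. -/
def l2dist {n : ℕ} (a b : Fin n → ℝ) : ℝ := Real.sqrt (∑ i, (a i - b i) ^ 2)

/-- Marginal likelihood of `τ`. -/
def lik {n : ℕ} (τ : ℝ) (y : Fin n → ℝ) : ℝ := ∏ i, margDens τ (y i)

/-- Unnormalised hierarchical posterior weight of `τ` given the data. -/
def hierWeight {n : ℕ} (pr : ℝ → ℝ) (y : Fin n → ℝ) (τ : ℝ) : ℝ := pr τ * lik τ y

/-- Hierarchical posterior distribution of `τ`. -/
def hierTauProb {n : ℕ} (pr : ℝ → ℝ) (y : Fin n → ℝ) (A : Set ℝ) : ℝ :=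
  (∫ τ in A, hierWeight pr y τ) / ∫ τ, hierWeight pr y τ

/-- Hierarchical marginal posterior probability for coordinate `i`. -/
def hierPostProb {n : ℕ} (pr : ℝ → ℝ) (y : Fin n → ℝ) (i : Fin n) (A : Set ℝ) : ℝ :=
  (∫ τ, hierWeight pr y τ * postProb τ (y i) A) / ∫ τ, hierWeight pr y τ

/-- Hierarchical marginal posterior mean for coordinate `i`. -/
def hierPostMean {n : ℕ} (pr : ℝ → ℝ) (y : Fin n → ℝ) (i : Fin n) : ℝ :=
  (∫ τ, hierWeight pr y τ * postMean τ (y i)) / ∫ τ, hierWeight pr y τ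

/-- Hierarchical posterior probability of a set of vectors. -/
def hierFullPostProb {n : ℕ} (pr : ℝ → ℝ) (y : Fin n → ℝ) (A : Set (Fin n → ℝ)) : ℝ :=
  (∫ τ, pr τ * ∫ θ in A, fullDens τ y θ) / ∫ τ, pr τ * ∫ θ, fullDens τ y θ

/-- Hierarchical posterior mean vector. -/
def hierFullPostMean {n : ℕ} (pr : ℝ → ℝ) (y : Fin n → ℝ) : Fin n → ℝ :=
  fun i => hierPostMean pr y i

/-- The functions `I_k`. -/
def Ik (τ k y : ℝ) : ℝ :=
  ∫ z in Set.Ioc (0 : ℝ) 1, z ^ k * (τ ^ 2 + (1 - τ ^ 2) * z)⁻¹ * Real.exp (y ^ 2 * z / 2)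

/-- The function `m_τ`. -/
def mHS (τ y : ℝ) : ℝ :=
  y ^ 2 * ((Ik τ (1 / 2) y - Ik τ (3 / 2) y) / Ik τ (-(1 / 2)) y) -
    Ik τ (1 / 2) y / Ik τ (-(1 / 2)) y

/-- The excessive-bias restriction with witness `q`. -/
def EBRwith (n : ℕ) (A Cs C : ℝ) (θ : Fin n → ℝ) (q : ℕ) : Prop :=
  1 ≤ q ∧
    (∑ i, if |θ i| < A * Real.sqrt (2 * Real.log ((n : ℝ) / (q : ℝ))) then (θ i) ^ 2 else 0)
        ≤ C * (q : ℝ) * Real.log ((n : ℝ) / (q : ℝ)) ∧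
    (q : ℝ) / Cs ≤
      (({i | A * Real.sqrt (2 * Real.log ((n : ℝ) / (q : ℝ))) ≤ |θ i|} : Set (Fin n)).ncard : ℝ)

/-- The excessive-bias restriction. -/
def EBR (n : ℕ) (A Cs C : ℝ) (θ : Fin n → ℝ) : Prop := ∃ q, EBRwith n A Cs C θ q

/-- The class `Θ[p]`. -/
def ThetaClass (n p : ℕ) (A Cs C : ℝ) : Set (Fin n → ℝ) :=
  {θ | θ ∈ nearlyBlack n p ∧ EBR n A Cs C θ}

/-- Smallest witness `q` in the excessive-bias restriction. -/
def qmin (n : ℕ) (A Cs C : ℝ) (θ : Fin n → ℝ) : ℕ := sInf {q | EBRwith n A Cs C θ q}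

/-- `p̃(θ₀)`: the number of coordinates above threshold for the smallest witness `q`. -/
def ptilde (n : ℕ) (A Cs C : ℝ) (θ : Fin n → ℝ) : ℕ :=
  ({i | A * Real.sqrt (2 * Real.log ((n : ℝ) / (qmin n A Cs C θ : ℝ))) ≤ |θ i|} :
    Set (Fin n)).ncard

/-!
Given the local scale `l`, the prior of a coordinate is `N(0, s²)` with `s = l * τ`, so the
posterior mean of the coordinate is `y * s² / (1 + s²)` and `κ(τ)` is an average of `s² / (1 + s²)`
over the posterior of `l`. It exceeds `1 / 2` iff the scales `s > 1` outweigh the scales `s < 1`.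
The half-Cauchy tail gives the former prior mass of order `τ`, while the likelihood favours them by
a factor close to `exp (y² / 2)`; the two effects balance at `|y| = ζ_τ`. Hence, for small `τ`,
every `|y| ≤ k ζ_τ` with `k < 1` is rejected and every `|y| ≥ k ζ_τ` with `k > 1` is selected.

If `|θ| ≤ k_M ζ_τ` or `|θ| ≥ k_L ζ_τ`, a misclassification therefore forces the noise to exceed a
fixed multiple `d ζ_τ`, which has probability at most `2 exp (-(d ζ_τ)² / 2)`. Since
`exp (-ζ_γ² / 2) ≤ γ`, the condition `ζ_γ = o(ζ_τ)` makes this `o(γ)`, and Markov's inequality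
bounds the fraction of misclassified coordinates by `γ` with probability tending to one.
-/

section Probability

variable {Ω : Type*} [MeasurableSpace Ω] {μ : Measure Ω}

lemma measureReal_le_abs_le_of_hasSubgaussianMGF [IsFiniteMeasure μ] {X : Ω → ℝ} {v : ℝ≥0}
    (hX : HasSubgaussianMGF X v μ) {t : ℝ} (ht : 0 ≤ t) :
    μ.real {ω | t ≤ |X ω|} ≤ 2 * exp (-t ^ 2 / (2 * v)) :=
  calc μ.real {ω | t ≤ |X ω|}
    _ ≤ μ.real ({ω | t ≤ X ω} ∪ {ω | t ≤ (-X) ω}) :=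
      measureReal_mono fun ω (hω : t ≤ |X ω|) => (le_abs.1 hω :)
    _ ≤ μ.real {ω | t ≤ X ω} + μ.real {ω | t ≤ (-X) ω} := measureReal_union_le _ _
    _ ≤ exp (-t ^ 2 / (2 * v)) + exp (-t ^ 2 / (2 * v)) :=
      add_le_add (hX.measure_ge_le ht) (hX.neg.measure_ge_le ht)
    _ = 2 * exp (-t ^ 2 / (2 * v)) := (two_mul _).symm

lemma hasSubgaussianMGF_sub_gaussianReal (m : ℝ) (v : ℝ≥0) :
    HasSubgaussianMGF (fun x => x - m) v (gaussianReal m v) where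
  integrable_exp_mul t := by
    simp_rw [mul_sub, exp_sub]
    exact (integrable_exp_mul_gaussianReal t).div_const _
  mgf_le t := by
    have hmap : (gaussianReal m v).map (fun x => x - m) = gaussianReal 0 v := by
      simpa using gaussianReal_map_sub_const (μ := m) (v := v) m
    rw [mgf_gaussianReal hmap, zero_mul, zero_add]

lemma gaussianReal_le_abs_sub_le (m : ℝ) (v : ℝ≥0) {t : ℝ} (ht : 0 ≤ t) :
    gaussianReal m v {x | t ≤ |x - m|} ≤ ENNReal.ofReal (2 * exp (-t ^ 2 / (2 * v))) := by
  rw [← ofReal_measureReal]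
  exact ENNReal.ofReal_le_ofReal
    (measureReal_le_abs_le_of_hasSubgaussianMGF (hasSubgaussianMGF_sub_gaussianReal m v) ht)

-- Markov's inequality for the number of events that occur; no independence is involved.
lemma measure_mul_ncard_lt_ncard_le {ι : Type*} [Finite ι] (J : Set ι) {A : ι → Set Ω}
    {p a : ℝ≥0∞} (hA : ∀ i ∈ J, μ (A i) ≤ p) (ha0 : a ≠ 0) (ha : a ≠ ∞) :
    μ {ω | a * J.ncard < {i | i ∈ J ∧ ω ∈ A i}.ncard} ≤ p / a := by
  classical
  lift J to Finset ι using toFinite J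
  rcases J.eq_empty_or_nonempty with rfl | hJ
  · simp
  have hJ0 : (J.card : ℝ≥0∞) ≠ 0 := by simpa using hJ.ne_empty
  let B i := toMeasurable μ (A i)
  let N ω := ∑ i ∈ J, (B i).indicator (1 : Ω → ℝ≥0∞) ω
  have hB i : MeasurableSet (B i) := measurableSet_toMeasurable μ (A i)
  have hN : Measurable N := Finset.measurable_sum J fun i _ => measurable_one.indicator (hB i)
  have hcard ω : ({i | i ∈ (J : Set ι) ∧ ω ∈ A i}.ncard : ℝ≥0∞) ≤ N ω := by
    simp only [N, indicator_apply, Pi.one_apply, Finset.sum_boole, Finset.mem_coe]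
    rw [← Finset.coe_filter, ncard_coe_finset]
    gcongr with i _
    exact subset_toMeasurable μ (A i)
  have hint : ∫⁻ ω, N ω ∂μ ≤ J.card * p := by
    rw [lintegral_finsetSum J fun i _ => measurable_one.indicator (hB i), ← nsmul_eq_mul]
    refine Finset.sum_le_card_nsmul J _ p fun i hi => ?_
    rw [lintegral_indicator_one (hB i), measure_toMeasurable]
    exact hA i hi
  rw [ncard_coe_finset]
  calc μ {ω | a * J.card < {i | i ∈ (J : Set ι) ∧ ω ∈ A i}.ncard}
    _ ≤ μ {ω | a * J.card ≤ N ω} := measure_mono fun ω hω => (le_of_lt hω).trans (hcard ω)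
    _ ≤ (∫⁻ ω, N ω ∂μ) / (a * J.card) :=
      meas_ge_le_lintegral_div hN.aemeasurable (mul_ne_zero ha0 hJ0)
        (ENNReal.mul_ne_top ha (ENNReal.natCast_ne_top _))
    _ ≤ J.card * p / (J.card * a) := by rw [mul_comm a]; gcongr
    _ = p / a := ENNReal.mul_div_mul_left p a hJ0 (ENNReal.natCast_ne_top _)

lemma measure_compl_one_sub_mul_ncard_le_ncard_le {ι : Type*} [Finite ι] (J : Set ι)
    {G : ι → Set Ω} {p r : ℝ} (hr : 0 < r) (hG : ∀ i ∈ J, μ (G i)ᶜ ≤ ENNReal.ofReal p) :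
    μ {ω | (1 - r) * J.ncard ≤ ({i | i ∈ J ∧ ω ∈ G i}.ncard : ℝ)}ᶜ ≤ ENNReal.ofReal (p / r) := by
  rw [ENNReal.ofReal_div_of_pos hr]
  refine (measure_mono fun ω hω => ?_).trans
    (measure_mul_ncard_lt_ncard_le J hG (by simpa using hr) ENNReal.ofReal_ne_top)
  have hfew : ({i | i ∈ J ∧ ω ∈ G i}.ncard : ℝ) < (1 - r) * J.ncard := not_le.1 hω
  have hsplit : ({i | i ∈ J ∧ ω ∈ G i}.ncard : ℝ) + {i | i ∈ J ∧ ω ∈ (G i)ᶜ}.ncard = J.ncard :=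
    mod_cast ncard_inter_add_ncard_sdiff_eq_ncard J {i | ω ∈ G i}
  have hmany : r * J.ncard < ({i | i ∈ J ∧ ω ∈ (G i)ᶜ}.ncard : ℝ) := by linarith
  have := (ENNReal.ofReal_lt_ofReal_iff_of_nonneg (by positivity)).2 hmany
  rwa [ENNReal.ofReal_mul hr.le, ENNReal.ofReal_natCast, ENNReal.ofReal_natCast] at this

end Probability

section Limits

variable {α : Type*} {l : Filter α} {Ω : α → Type*} [∀ a, MeasurableSpace (Ω a)]
  {μ : ∀ a, Measure (Ω a)} [∀ a, IsProbabilityMeasure (μ a)]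

lemma tendsto_measure_one_of_tendsto_compl {E : ∀ a, Set (Ω a)}
    (h : Tendsto (fun a => μ a (E a)ᶜ) l (nhds 0)) : Tendsto (fun a => μ a (E a)) l (nhds 1) := by
  have hlow a : 1 - μ a (E a)ᶜ ≤ μ a (E a) := by
    rw [tsub_le_iff_right, ← measure_univ (μ := μ a), ← union_compl_self (E a)]
    exact measure_union_le _ _
  refine tendsto_of_tendsto_of_tendsto_of_le_of_le ?_ tendsto_const_nhds hlow fun a => prob_le_one
  simpa using ENNReal.Tendsto.sub tendsto_const_nhds h (.inl ENNReal.one_ne_top)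

lemma tendsto_measure_one_sub_mul_ncard_le {ι : α → Type*} [∀ a, Finite (ι a)]
    (J : ∀ a, Set (ι a)) {G : ∀ a, ι a → Set (Ω a)} {p r : α → ℝ} (hr : ∀ᶠ a in l, 0 < r a)
    (hG : ∀ᶠ a in l, ∀ i ∈ J a, μ a (G a i)ᶜ ≤ ENNReal.ofReal (p a))
    (hpr : Tendsto (fun a => p a / r a) l (nhds 0)) :
    Tendsto (fun a => μ a {ω | (1 - r a) * (J a).ncard ≤ ({i | i ∈ J a ∧ ω ∈ G a i}.ncard : ℝ)})
      l (nhds 1) := by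
  have hlim : Tendsto (fun a => ENNReal.ofReal (p a / r a)) l (nhds 0) := by
    simpa using ENNReal.tendsto_ofReal hpr
  refine tendsto_measure_one_of_tendsto_compl
    (tendsto_of_tendsto_of_tendsto_of_le_of_le' tendsto_const_nhds hlim
      (.of_forall fun _ => zero_le) ?_)
  filter_upwards [hr, hG] with a ha hGa
  exact measure_compl_one_sub_mul_ncard_le_ncard_le (J a) ha hGa

end Limits

section Data

variable {n : ℕ} (θ : Fin n → ℝ)

instance isProbabilityMeasure_Pdata : IsProbabilityMeasure (Pdata θ) := by
  unfold Pdata; infer_instance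

lemma Pdata_setOf_apply_mem_le (i : Fin n) (A : Set ℝ) :
    Pdata θ {y | y i ∈ A} ≤ gaussianReal (θ i) 1 A := by
  have h := measurePreserving_eval (fun i => gaussianReal (θ i) 1) i
  exact (Measure.le_map_apply h.measurable.aemeasurable A).trans_eq (congrArg (· A) h.map_eq)

end Data

section Selection

/-- The standard half-Cauchy density, the prior of a local scale `l`. -/
def halfCauchyPDF (l : ℝ) : ℝ := 2 / (Real.pi * (1 + l ^ 2))

/-- The factor by which the posterior mean shrinks an observation `y ∼ N(θ, 1)` under the prior
`θ ∼ N(0, s²)`; it is also the posterior variance. -/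
def shrinkage (s : ℝ) : ℝ := s ^ 2 / (1 + s ^ 2)

/-- The ratio at `y` of the densities of `N(0, 1 + s²)` and `N(0, 1)`, which are the marginal laws
of an observation under the priors `θ ∼ N(0, s²)` and `θ = 0`. -/
def bayesFactor (s y : ℝ) : ℝ := (√(1 + s ^ 2))⁻¹ * exp (y ^ 2 / 2 * shrinkage s)

/-- The posterior density of the local scale `l` given the observation `y`, up to a factor that
does not depend on `l`. -/
def scaleWeight (τ y l : ℝ) : ℝ := halfCauchyPDF l * bayesFactor (l * τ) y

/-- The thresholding rule: an observation `y` is declared a signal if its shrinkage factor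
`κ(τ) = postMean τ y / y` exceeds `1 / 2`. Since `x / 0 = 0`, the value `y = 0` is not selected. -/
def IsSelected (τ y : ℝ) : Prop := 1 / 2 < postMean τ y / y

/-- The integrand over the local scale whose integral has the sign of `κ(τ) - 1 / 2`. -/
def selectionIntegrand (τ y l : ℝ) : ℝ := (2 * shrinkage (l * τ) - 1) * scaleWeight τ y l

lemma halfCauchyPDF_eq (l : ℝ) : halfCauchyPDF l = 2 / Real.pi * (1 + l ^ 2)⁻¹ := by
  unfold halfCauchyPDF; field_simp

lemma halfCauchyPDF_pos (l : ℝ) : 0 < halfCauchyPDF l := by unfold halfCauchyPDF; positivity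

lemma measurable_halfCauchyPDF : Measurable halfCauchyPDF := by unfold halfCauchyPDF; fun_prop

lemma integrable_halfCauchyPDF : Integrable halfCauchyPDF := by
  simpa only [← halfCauchyPDF_eq] using integrable_inv_one_add_sq.const_mul (2 / Real.pi)

lemma integral_Ioi_halfCauchyPDF (a : ℝ) :
    ∫ l in Ioi a, halfCauchyPDF l = 2 / Real.pi * (Real.pi / 2 - arctan a) := by
  simp_rw [halfCauchyPDF_eq]
  rw [integral_const_mul, integral_Ioi_inv_one_add_sq]

lemma integral_Ioi_zero_halfCauchyPDF : ∫ l in Ioi (0 : ℝ), halfCauchyPDF l = 1 := by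
  rw [integral_Ioi_halfCauchyPDF, arctan_zero, sub_zero]
  field_simp

lemma integral_Ioi_halfCauchyPDF_le {a : ℝ} (ha : 0 < a) :
    ∫ l in Ioi a, halfCauchyPDF l ≤ a⁻¹ := by
  have hpos : 0 < arctan a⁻¹ := arctan_pos.2 (inv_pos.2 ha)
  have hle : arctan a⁻¹ ≤ a⁻¹ :=
    (lt_tan hpos (arctan_lt_pi_div_two _)).le.trans_eq (tan_arctan _)
  have hpi : 2 / Real.pi ≤ 1 := (div_le_one pi_pos).2 two_le_pi
  rw [integral_Ioi_halfCauchyPDF, ← arctan_inv_of_pos ha]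
  exact (mul_le_of_le_one_left hpos.le hpi).trans hle

lemma shrinkage_nonneg (s : ℝ) : 0 ≤ shrinkage s := by unfold shrinkage; positivity

lemma shrinkage_pos {s : ℝ} (hs : s ≠ 0) : 0 < shrinkage s := by unfold shrinkage; positivity

lemma one_sub_shrinkage (s : ℝ) : 1 - shrinkage s = (1 + s ^ 2)⁻¹ := by
  unfold shrinkage; field_simp; ring

lemma shrinkage_le_one (s : ℝ) : shrinkage s ≤ 1 := by
  have : 0 < 1 - shrinkage s := one_sub_shrinkage s ▸ by positivity
  linarith

lemma shrinkage_le_sq (s : ℝ) : shrinkage s ≤ s ^ 2 :=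
  div_le_self (sq_nonneg s) (le_add_of_nonneg_right (sq_nonneg s))

lemma shrinkage_le_half_iff {s : ℝ} (hs : 0 ≤ s) : shrinkage s ≤ 1 / 2 ↔ s ≤ 1 := by
  rw [shrinkage, div_le_iff₀ (by positivity), ← sq_le_one_iff₀ hs]
  constructor <;> intro h <;> linarith

lemma one_sub_inv_sq_le_shrinkage {R s : ℝ} (hR : 0 < R) (hs : R ≤ s) :
    1 - (R ^ 2)⁻¹ ≤ shrinkage s := by
  have : (1 + s ^ 2)⁻¹ ≤ (R ^ 2)⁻¹ := by gcongr; nlinarith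
  linarith [one_sub_shrinkage s]

lemma measurable_shrinkage : Measurable shrinkage := by unfold shrinkage; fun_prop

lemma scaleWeight_pos (τ y l : ℝ) : 0 < scaleWeight τ y l := by
  have := halfCauchyPDF_pos l
  unfold scaleWeight bayesFactor
  positivity

lemma measurable_scaleWeight (τ y : ℝ) : Measurable (scaleWeight τ y) := by
  have := measurable_halfCauchyPDF
  have := measurable_shrinkage
  unfold scaleWeight bayesFactor
  fun_prop

lemma bayesFactor_le {r s : ℝ} (y : ℝ) (hr : shrinkage s ≤ r) :
    bayesFactor s y ≤ exp (y ^ 2 / 2 * r) := by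
  have hsqrt : (√(1 + s ^ 2))⁻¹ ≤ 1 :=
    inv_le_one_of_one_le₀ (one_le_sqrt.2 (le_add_of_nonneg_right (sq_nonneg s)))
  calc bayesFactor s y ≤ 1 * exp (y ^ 2 / 2 * r) := by unfold bayesFactor; gcongr
    _ = exp (y ^ 2 / 2 * r) := one_mul _

lemma one_sub_shrinkage_mul_exp_le_bayesFactor (s y : ℝ) :
    (1 - shrinkage s) * exp (y ^ 2 / 2 * shrinkage s) ≤ bayesFactor s y := by
  rw [one_sub_shrinkage, bayesFactor]
  gcongr
  exact sqrt_le_self_iff.2 (.inr (le_add_of_nonneg_right (sq_nonneg s)))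

lemma scaleWeight_le {r τ l : ℝ} (y : ℝ) (hr : shrinkage (l * τ) ≤ r) :
    scaleWeight τ y l ≤ halfCauchyPDF l * exp (y ^ 2 / 2 * r) :=
  mul_le_mul_of_nonneg_left (bayesFactor_le y hr) (halfCauchyPDF_pos l).le

lemma integrable_scaleWeight (τ y : ℝ) : Integrable (scaleWeight τ y) := by
  refine (integrable_halfCauchyPDF.mul_const (exp (y ^ 2 / 2 * 1))).mono'
    (measurable_scaleWeight τ y).aestronglyMeasurable (ae_of_all _ fun l => ?_)
  rw [norm_of_nonneg (scaleWeight_pos τ y l).le]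
  exact scaleWeight_le y (shrinkage_le_one _)

lemma integrable_shrinkage_mul_scaleWeight (τ y : ℝ) :
    Integrable fun l => shrinkage (l * τ) * scaleWeight τ y l := by
  refine (integrable_scaleWeight τ y).bdd_mul (c := 1)
    (measurable_shrinkage.comp (measurable_mul_const τ)).aestronglyMeasurable
    (ae_of_all _ fun l => ?_)
  rw [Real.norm_of_nonneg (shrinkage_nonneg _)]
  exact shrinkage_le_one _

lemma selectionIntegrand_eq (τ y l : ℝ) : selectionIntegrand τ y l =
    2 * (shrinkage (l * τ) * scaleWeight τ y l) - scaleWeight τ y l := by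
  unfold selectionIntegrand; ring

lemma integrable_selectionIntegrand (τ y : ℝ) : Integrable (selectionIntegrand τ y) := by
  rw [show selectionIntegrand τ y = _ from funext (selectionIntegrand_eq τ y)]
  exact ((integrable_shrinkage_mul_scaleWeight τ y).const_mul 2).sub (integrable_scaleWeight τ y)

lemma integral_scaleWeight_pos (τ y : ℝ) : 0 < ∫ l in Ioi (0 : ℝ), scaleWeight τ y l := by
  rw [setIntegral_pos_iff_support_of_nonneg_ae (ae_of_all _ fun l => (scaleWeight_pos τ y l).le)
    (integrable_scaleWeight τ y).integrableOn,
    Function.support_eq_univ fun l => (scaleWeight_pos τ y l).ne', univ_inter, volume_Ioi]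
  exact ENNReal.zero_lt_top

lemma phiN_pos (x : ℝ) : 0 < phiN x := by unfold phiN; positivity

lemma measurable_phiN : Measurable phiN := by unfold phiN; fun_prop

lemma phiN_div_eq_gaussianPDFReal {s : ℝ} (hs : 0 < s) (θ : ℝ) :
    phiN (θ / s) / s = gaussianPDFReal 0 (toNNReal (s ^ 2)) θ := by
  have hexp : -(θ / s) ^ 2 / 2 = -θ ^ 2 / (2 * s ^ 2) := by field_simp
  rw [gaussianPDFReal_def]
  simp only [coe_toNNReal _ (sq_nonneg s), sub_zero]
  rw [phiN, hexp, sqrt_mul (by positivity : 0 ≤ 2 * Real.pi) (s ^ 2), sqrt_sq hs.le]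
  field_simp

-- Completing the square in `θ`: the joint density factors into the marginal density of `y` and
-- the posterior density `N(shrinkage s * y, shrinkage s)` of `θ`.
lemma phiN_sub_mul_phiN_div {s : ℝ} (hs : 0 < s) (y θ : ℝ) :
    phiN (y - θ) * (phiN (θ / s) / s) = phiN y * bayesFactor s y *
      gaussianPDFReal (shrinkage s * y) (toNNReal (shrinkage s)) θ := by
  have hexp : exp (-(y - θ) ^ 2 / 2) * exp (-(θ / s) ^ 2 / 2) =
      exp (-y ^ 2 / 2) * exp (y ^ 2 / 2 * shrinkage s) *
        exp (-(θ - shrinkage s * y) ^ 2 / (2 * shrinkage s)) := by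
    simp only [← exp_add, shrinkage]
    congr 1
    field_simp
    ring
  have hsqrt : √(2 * Real.pi * shrinkage s) = √(2 * Real.pi) * (s / √(1 + s ^ 2)) := by
    rw [shrinkage, sqrt_mul (by positivity), sqrt_div (by positivity), sqrt_sq hs.le]
  rw [gaussianPDFReal_def]
  simp only [coe_toNNReal _ (shrinkage_nonneg s), hsqrt]
  unfold phiN bayesFactor
  calc _ = (√(2 * Real.pi))⁻¹ * (√(2 * Real.pi))⁻¹ / s *
        (exp (-(y - θ) ^ 2 / 2) * exp (-(θ / s) ^ 2 / 2)) := by ring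
    _ = _ := by rw [hexp]; field_simp

lemma integrable_prod_horseshoe {τ : ℝ} (hτ : 0 < τ) :
    Integrable (fun q : ℝ × ℝ => phiN (q.1 / (q.2 * τ)) / (q.2 * τ) * halfCauchyPDF q.2)
      (volume.prod (volume.restrict (Ioi 0))) := by
  have hmeas : Measurable fun q : ℝ × ℝ =>
      phiN (q.1 / (q.2 * τ)) / (q.2 * τ) * halfCauchyPDF q.2 := by
    have := measurable_phiN
    have := measurable_halfCauchyPDF
    fun_prop
  have hgauss {l : ℝ} (hl : l ∈ Ioi 0) (θ : ℝ) : phiN (θ / (l * τ)) / (l * τ) * halfCauchyPDF l =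
      gaussianPDFReal 0 (toNNReal ((l * τ) ^ 2)) θ * halfCauchyPDF l := by
    rw [phiN_div_eq_gaussianPDFReal (mul_pos hl hτ)]
  rw [integrable_prod_iff' hmeas.aestronglyMeasurable]
  constructor
  · filter_upwards [ae_restrict_mem measurableSet_Ioi] with l hl
    simp_rw [hgauss hl]
    exact (integrable_gaussianPDFReal _ _).mul_const _
  · refine integrable_halfCauchyPDF.restrict.congr ?_
    filter_upwards [ae_restrict_mem measurableSet_Ioi] with l hl
    have hv : toNNReal ((l * τ) ^ 2) ≠ 0 := (toNNReal_pos.2 (pow_pos (mul_pos hl hτ) 2)).ne'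
    simp_rw [hgauss hl, norm_mul, norm_of_nonneg (gaussianPDFReal_nonneg _ _ _),
      norm_of_nonneg (halfCauchyPDF_pos l).le]
    rw [integral_mul_const, integral_gaussianPDFReal_eq_one _ hv, one_mul]

-- Given the local scale, the posterior of `θ` is Gaussian; Fubini makes the posterior a mixture.
lemma integral_mul_postDens {τ : ℝ} (hτ : 0 < τ) (y : ℝ) {b : ℝ → ℝ} (hb : Measurable b) {C : ℝ}
    (hC : ∀ θ, ‖b θ * phiN (y - θ)‖ ≤ C) :
    ∫ θ, b θ * postDens τ y θ = phiN y * ∫ l in Ioi (0 : ℝ), scaleWeight τ y l *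
      ∫ θ, b θ ∂gaussianReal (shrinkage (l * τ) * y) (toNNReal (shrinkage (l * τ))) := by
  have hmeas : Measurable fun θ => b θ * phiN (y - θ) := by
    have := measurable_phiN
    fun_prop
  have hint := (integrable_prod_horseshoe hτ).bdd_mul (c := C)
    (hmeas.comp measurable_fst).aestronglyMeasurable (ae_of_all _ fun q => hC q.1)
  calc ∫ θ, b θ * postDens τ y θ
    _ = ∫ θ, ∫ l in Ioi (0 : ℝ), b θ * phiN (y - θ) *
        (phiN (θ / (l * τ)) / (l * τ) * halfCauchyPDF l) := by
      simp_rw [integral_const_mul, mul_assoc (b _)]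
      rfl
    _ = ∫ l in Ioi (0 : ℝ), ∫ θ, b θ * phiN (y - θ) *
        (phiN (θ / (l * τ)) / (l * τ) * halfCauchyPDF l) := integral_integral_swap hint
    _ = _ := by
      rw [← integral_const_mul]
      refine setIntegral_congr_fun measurableSet_Ioi fun l hl => ?_
      have hs : 0 < l * τ := mul_pos hl hτ
      have hv : toNNReal (shrinkage (l * τ)) ≠ 0 := (toNNReal_pos.2 (shrinkage_pos hs.ne')).ne'
      rw [integral_gaussianReal_eq_integral_smul hv, ← mul_assoc, ← integral_const_mul]
      congr 1 with θ
      have := phiN_sub_mul_phiN_div hs y θ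
      rw [smul_eq_mul, scaleWeight]
      linear_combination b θ * halfCauchyPDF l * this

lemma phiN_le_exp (x : ℝ) : phiN x ≤ exp (-x ^ 2 / 2) := by
  have : (√(2 * Real.pi))⁻¹ ≤ 1 :=
    inv_le_one_of_one_le₀ (one_le_sqrt.2 (by linarith [pi_gt_three]))
  exact mul_le_of_le_one_left (exp_pos _).le this

lemma phiN_le_one (x : ℝ) : phiN x ≤ 1 :=
  (phiN_le_exp x).trans (exp_le_one_iff.2 (by nlinarith [sq_nonneg x]))

lemma abs_mul_phiN_le_one (x : ℝ) : |x| * phiN x ≤ 1 := by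
  have hx : |x| ≤ exp (x ^ 2 / 2) := by
    nlinarith [add_one_le_exp (x ^ 2 / 2), sq_abs x, sq_nonneg (|x| - 1)]
  calc |x| * phiN x ≤ exp (x ^ 2 / 2) * exp (-x ^ 2 / 2) := by
        gcongr
        exacts [(phiN_pos x).le, phiN_le_exp x]
    _ = 1 := by rw [← exp_add, neg_div, add_neg_cancel, exp_zero]

lemma norm_mul_phiN_sub_le (y θ : ℝ) : ‖θ * phiN (y - θ)‖ ≤ |y| + 1 := by
  have htri : |θ| ≤ |y| + |y - θ| := by simpa using abs_sub y (y - θ)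
  have hpos := phiN_pos (y - θ)
  calc ‖θ * phiN (y - θ)‖ = |θ| * phiN (y - θ) := by
        rw [norm_mul, norm_of_nonneg hpos.le, norm_eq_abs]
    _ ≤ (|y| + |y - θ|) * phiN (y - θ) := by gcongr
    _ = |y| * phiN (y - θ) + |y - θ| * phiN (y - θ) := add_mul _ _ _
    _ ≤ |y| + 1 :=
      add_le_add (mul_le_of_le_one_right (abs_nonneg y) (phiN_le_one _)) (abs_mul_phiN_le_one _)

lemma margDens_eq {τ : ℝ} (hτ : 0 < τ) (y : ℝ) :
    margDens τ y = phiN y * ∫ l in Ioi (0 : ℝ), scaleWeight τ y l := by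
  have h := integral_mul_postDens hτ y (b := fun _ => 1) measurable_const (C := 1) fun θ => by
    rw [one_mul, norm_of_nonneg (phiN_pos _).le]
    exact phiN_le_one _
  simpa [margDens] using h

lemma integral_id_mul_postDens {τ : ℝ} (hτ : 0 < τ) (y : ℝ) :
    ∫ θ, θ * postDens τ y θ =
      phiN y * y * ∫ l in Ioi (0 : ℝ), shrinkage (l * τ) * scaleWeight τ y l := by
  rw [integral_mul_postDens hτ y measurable_id' (norm_mul_phiN_sub_le y), mul_assoc (phiN y)]
  congr 1
  rw [← integral_const_mul]
  refine setIntegral_congr_fun measurableSet_Ioi fun l _ => ?_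
  simp only [integral_id_gaussianReal]
  ring

lemma postMean_div_self {τ y : ℝ} (hτ : 0 < τ) (hy : y ≠ 0) :
    postMean τ y / y = (∫ l in Ioi (0 : ℝ), shrinkage (l * τ) * scaleWeight τ y l) /
      ∫ l in Ioi (0 : ℝ), scaleWeight τ y l := by
  rw [postMean, integral_id_mul_postDens hτ, margDens_eq hτ, mul_assoc (phiN y),
    mul_div_mul_left _ _ (phiN_pos y).ne', div_div, mul_comm _ y, mul_div_mul_left _ _ hy]

lemma not_isSelected_zero (τ : ℝ) : ¬ IsSelected τ 0 := by norm_num [IsSelected]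

lemma isSelected_iff_integral_pos {τ y : ℝ} (hτ : 0 < τ) (hy : y ≠ 0) :
    IsSelected τ y ↔ 0 < ∫ l in Ioi (0 : ℝ), selectionIntegrand τ y l := by
  simp_rw [selectionIntegrand_eq]
  rw [integral_sub ((integrable_shrinkage_mul_scaleWeight τ y).const_mul 2).integrableOn
      (integrable_scaleWeight τ y).integrableOn, integral_const_mul, IsSelected,
    postMean_div_self hτ hy, lt_div_iff₀ (integral_scaleWeight_pos τ y)]
  constructor <;> intro h <;> linarith

lemma neg_scaleWeight_le_selectionIntegrand (τ y l : ℝ) :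
    -scaleWeight τ y l ≤ selectionIntegrand τ y l := by
  have := mul_nonneg (shrinkage_nonneg (l * τ)) (scaleWeight_pos τ y l).le
  linarith [selectionIntegrand_eq τ y l]

lemma selectionIntegrand_le_scaleWeight (τ y l : ℝ) :
    selectionIntegrand τ y l ≤ scaleWeight τ y l := by
  have := mul_le_of_le_one_left (scaleWeight_pos τ y l).le (shrinkage_le_one (l * τ))
  linarith [selectionIntegrand_eq τ y l]

end Selection


section Threshold

lemma setIntegral_Ioi_eq_add_add {f : ℝ → ℝ} {a b c : ℝ} (hf : IntegrableOn f (Ioi a))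
    (hab : a ≤ b) (hbc : b ≤ c) :
    ∫ x in Ioi a, f x = (∫ x in Ioc a b, f x) + (∫ x in Ioc b c, f x) + ∫ x in Ioi c, f x := by
  have hfb : IntegrableOn f (Ioi b) := hf.mono_set (Ioi_subset_Ioi hab)
  rw [← Ioc_union_Ioi_eq_Ioi hab, setIntegral_union Ioc_disjoint_Ioi_same measurableSet_Ioi
      (hf.mono_set Ioc_subset_Ioi_self) hfb, ← Ioc_union_Ioi_eq_Ioi hbc,
    setIntegral_union Ioc_disjoint_Ioi_same measurableSet_Ioi
      (hfb.mono_set Ioc_subset_Ioi_self) (hfb.mono_set (Ioi_subset_Ioi hbc)), add_assoc]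

lemma selectionIntegrand_nonpos {τ l : ℝ} (y : ℝ) (h0 : 0 ≤ l * τ) (h1 : l * τ ≤ 1) :
    selectionIntegrand τ y l ≤ 0 := by
  have := (shrinkage_le_half_iff h0).2 h1
  exact mul_nonpos_of_nonpos_of_nonneg (by linarith) (scaleWeight_pos τ y l).le

lemma selectionIntegrand_nonneg {τ l : ℝ} (y : ℝ) (h1 : 1 ≤ l * τ) :
    0 ≤ selectionIntegrand τ y l := by
  have : 1 / 2 ≤ shrinkage (l * τ) := by
    rw [shrinkage, le_div_iff₀ (by positivity)]
    nlinarith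
  exact mul_nonneg (by linarith) (scaleWeight_pos τ y l).le

lemma selectionIntegrand_le_neg_one_tenth {τ l : ℝ} (y : ℝ) (hτ0 : 0 < τ) (hτ : τ ≤ 1 / 2)
    (hl : l ∈ Ioc 0 1) : selectionIntegrand τ y l ≤ -(1 / 10) := by
  have hs : shrinkage (l * τ) ≤ 1 / 5 := by
    have : l * τ ≤ 1 / 2 := by nlinarith [hl.1, hl.2]
    rw [shrinkage, div_le_iff₀ (by positivity)]
    nlinarith [mul_pos hl.1 hτ0]
  have hcauchy : 1 / 4 ≤ halfCauchyPDF l := by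
    rw [halfCauchyPDF, div_le_div_iff₀ (by norm_num) (by positivity)]
    nlinarith [pi_pos, pi_le_four, hl.1, hl.2]
  have hbayes : 4 / 5 ≤ bayesFactor (l * τ) y := by
    have hexp : 1 ≤ exp (y ^ 2 / 2 * shrinkage (l * τ)) :=
      one_le_exp (mul_nonneg (by positivity) (shrinkage_nonneg _))
    nlinarith [one_sub_shrinkage_mul_exp_le_bayesFactor (l * τ) y]
  have hweight : 1 / 5 ≤ scaleWeight τ y l :=
    calc (1 / 5 : ℝ) = 1 / 4 * (4 / 5) := by norm_num
      _ ≤ scaleWeight τ y l := mul_le_mul hcauchy hbayes (by norm_num) (halfCauchyPDF_pos l).le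
  unfold selectionIntegrand
  nlinarith

lemma not_isSelected_of_exp_mul_le {τ y : ℝ} (hτ0 : 0 < τ) (hτ : τ ≤ 1 / 2)
    (h : exp (y ^ 2 / 2) * τ ≤ 1 / 10) : ¬ IsSelected τ y := by
  rcases eq_or_ne y 0 with rfl | hy
  · exact not_isSelected_zero τ
  have hτ1 : 1 ≤ τ⁻¹ := (one_le_inv₀ hτ0).2 (by linarith)
  have hint := integrable_selectionIntegrand τ y
  have hsmall : ∫ l in Ioc 0 1, selectionIntegrand τ y l ≤ -(1 / 10) := by
    simpa using setIntegral_mono_on hint.integrableOn (integrableOn_const (by simp))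
      measurableSet_Ioc fun l => selectionIntegrand_le_neg_one_tenth y hτ0 hτ
  have hmid : ∫ l in Ioc 1 τ⁻¹, selectionIntegrand τ y l ≤ 0 :=
    setIntegral_nonpos measurableSet_Ioc fun l hl => selectionIntegrand_nonpos y
      (mul_nonneg (zero_le_one.trans hl.1.le) hτ0.le)
      ((le_mul_inv_iff₀ hτ0).1 (by simpa using hl.2))
  have htail : ∫ l in Ioi τ⁻¹, selectionIntegrand τ y l ≤ exp (y ^ 2 / 2) * τ :=
    calc ∫ l in Ioi τ⁻¹, selectionIntegrand τ y l
      _ ≤ ∫ l in Ioi τ⁻¹, halfCauchyPDF l * exp (y ^ 2 / 2) :=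
        setIntegral_mono hint.integrableOn (integrable_halfCauchyPDF.mul_const _).integrableOn
          fun l => (selectionIntegrand_le_scaleWeight τ y l).trans
            (by simpa using scaleWeight_le y (shrinkage_le_one (l * τ)))
      _ ≤ exp (y ^ 2 / 2) * τ := by
        rw [integral_mul_const, mul_comm]
        gcongr
        simpa using integral_Ioi_halfCauchyPDF_le (inv_pos.2 hτ0)
  rw [isSelected_iff_integral_pos hτ0 hy,
    setIntegral_Ioi_eq_add_add hint.integrableOn zero_le_one hτ1]
  linarith

lemma neg_mul_exp_le_setIntegral_Ioc_selectionIntegrand {τ r a b : ℝ} (y : ℝ)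
    (hr : ∀ l ∈ Ioc a b, shrinkage (l * τ) ≤ r) :
    -((∫ l in Ioi a, halfCauchyPDF l) * exp (y ^ 2 / 2 * r)) ≤
      ∫ l in Ioc a b, selectionIntegrand τ y l := by
  have hcauchy := integrable_halfCauchyPDF
  calc -((∫ l in Ioi a, halfCauchyPDF l) * exp (y ^ 2 / 2 * r))
    _ ≤ -((∫ l in Ioc a b, halfCauchyPDF l) * exp (y ^ 2 / 2 * r)) := by
      gcongr -(?_ * _)
      exact setIntegral_mono_set hcauchy.integrableOn
        (ae_of_all _ fun l => (halfCauchyPDF_pos l).le) Ioc_subset_Ioi_self.eventuallyLE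
    _ ≤ ∫ l in Ioc a b, selectionIntegrand τ y l := by
      rw [← integral_mul_const, ← integral_neg]
      exact setIntegral_mono_on (hcauchy.mul_const _).neg.integrableOn
        (integrable_selectionIntegrand τ y).integrableOn measurableSet_Ioc fun l hl =>
          (neg_le_neg (scaleWeight_le y (hr l hl))).trans
            (neg_scaleWeight_le_selectionIntegrand τ y l)

lemma le_scaleWeight {τ : ℝ} (hτ0 : 0 < τ) (hτ1 : τ ≤ 1) (y l : ℝ) :
    τ ^ 2 / 2 * (1 - shrinkage (l * τ)) ^ 2 * exp (y ^ 2 / 2 * shrinkage (l * τ)) ≤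
      scaleWeight τ y l := by
  have hcauchy : τ ^ 2 / 2 * (1 - shrinkage (l * τ)) ≤ halfCauchyPDF l := by
    rw [one_sub_shrinkage, halfCauchyPDF, ← div_eq_mul_inv, div_div,
      div_le_div_iff₀ (by positivity) (by positivity)]
    nlinarith [mul_le_mul_of_nonneg_right pi_le_four (by positivity : 0 ≤ τ ^ 2 + (l * τ) ^ 2)]
  calc _ = τ ^ 2 / 2 * (1 - shrinkage (l * τ)) *
        ((1 - shrinkage (l * τ)) * exp (y ^ 2 / 2 * shrinkage (l * τ))) := by ring
    _ ≤ scaleWeight τ y l := by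
      have := one_sub_shrinkage_mul_exp_le_bayesFactor (l * τ) y
      have := shrinkage_le_one (l * τ)
      have := halfCauchyPDF_pos l
      unfold scaleWeight
      gcongr

lemma le_selectionIntegrand {τ R l : ℝ} (y : ℝ) (hτ0 : 0 < τ) (hτ1 : τ ≤ 1) (hR : 2 ≤ R)
    (hl : l * τ ∈ Icc R (R + 1)) :
    τ ^ 2 / 4 * ((1 + (R + 1) ^ 2)⁻¹) ^ 2 * exp (y ^ 2 / 2 * (1 - (R ^ 2)⁻¹)) ≤
      selectionIntegrand τ y l := by
  have hs0 : 0 ≤ l * τ := by linarith [hl.1]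
  have hsR : l * τ ≤ R + 1 := hl.2
  have hshrink := one_sub_inv_sq_le_shrinkage (by linarith) hl.1
  have hRinv : (R ^ 2)⁻¹ ≤ 1 / 4 := by
    rw [inv_le_comm₀ (by positivity) (by norm_num)]
    nlinarith
  have hweight := calc
    τ ^ 2 / 2 * ((1 + (R + 1) ^ 2)⁻¹) ^ 2 * exp (y ^ 2 / 2 * (1 - (R ^ 2)⁻¹))
    _ ≤ τ ^ 2 / 2 * (1 - shrinkage (l * τ)) ^ 2 * exp (y ^ 2 / 2 * shrinkage (l * τ)) := by
      rw [one_sub_shrinkage]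
      gcongr
    _ ≤ scaleWeight τ y l := le_scaleWeight hτ0 hτ1 y l
  unfold selectionIntegrand
  nlinarith [scaleWeight_pos τ y l]

lemma le_setIntegral_Ioi_selectionIntegrand {τ R : ℝ} (y : ℝ) (hτ0 : 0 < τ) (hτ1 : τ ≤ 1)
    (hR : 2 ≤ R) :
    τ / 4 * ((1 + (R + 1) ^ 2)⁻¹) ^ 2 * exp (y ^ 2 / 2 * (1 - (R ^ 2)⁻¹)) ≤
      ∫ l in Ioi τ⁻¹, selectionIntegrand τ y l := by
  have hint := integrable_selectionIntegrand τ y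
  have hsub : Icc (R / τ) ((R + 1) / τ) ⊆ Ioi τ⁻¹ := fun l hl =>
    lt_of_lt_of_le (by rw [← one_div]; gcongr; linarith) hl.1
  calc τ / 4 * ((1 + (R + 1) ^ 2)⁻¹) ^ 2 * exp (y ^ 2 / 2 * (1 - (R ^ 2)⁻¹))
    _ = τ ^ 2 / 4 * ((1 + (R + 1) ^ 2)⁻¹) ^ 2 * exp (y ^ 2 / 2 * (1 - (R ^ 2)⁻¹)) *
        volume.real (Icc (R / τ) ((R + 1) / τ)) := by
      rw [volume_real_Icc_of_le (by gcongr; linarith)]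
      field_simp
      ring
    _ ≤ ∫ l in Icc (R / τ) ((R + 1) / τ), selectionIntegrand τ y l :=
      setIntegral_ge_of_const_le_real measurableSet_Icc (by simp)
        (fun l hl => le_selectionIntegrand y hτ0 hτ1 hR
          ⟨(div_le_iff₀ hτ0).1 hl.1, (le_div_iff₀ hτ0).1 hl.2⟩) hint.integrableOn
    _ ≤ ∫ l in Ioi τ⁻¹, selectionIntegrand τ y l :=
      setIntegral_mono_set hint.integrableOn
        ((ae_restrict_mem measurableSet_Ioi).mono fun l hl => selectionIntegrand_nonneg y
          ((inv_le_iff_one_le_mul₀ hτ0).1 (le_of_lt hl))) hsub.eventuallyLE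

-- The right-hand side bounds the contribution of the scales with `l * τ ∈ [R, R + 1]` from below;
-- the two terms on the left bound the loss on `l * τ ≤ 1 / R` and on `1 / R < l * τ ≤ 1`.
lemma isSelected_of_lt {τ y R : ℝ} (hτ0 : 0 < τ) (hτ1 : τ ≤ 1) (hy : y ≠ 0) (hR : 2 ≤ R)
    (h : exp (y ^ 2 / 2 * (R ^ 2)⁻¹) + R * τ * exp (y ^ 2 / 2 * (1 / 2)) <
      τ / 4 * ((1 + (R + 1) ^ 2)⁻¹) ^ 2 * exp (y ^ 2 / 2 * (1 - (R ^ 2)⁻¹))) :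
    IsSelected τ y := by
  have : 0 < R := by linarith
  have hRτ : (R * τ)⁻¹ ≤ τ⁻¹ := by gcongr; nlinarith
  have hsmall : -exp (y ^ 2 / 2 * (R ^ 2)⁻¹) ≤
      ∫ l in Ioc 0 (R * τ)⁻¹, selectionIntegrand τ y l := by
    have := neg_mul_exp_le_setIntegral_Ioc_selectionIntegrand (τ := τ) (r := (R ^ 2)⁻¹) (a := 0)
      (b := (R * τ)⁻¹) y fun l hl => ?_
    · rwa [integral_Ioi_zero_halfCauchyPDF, one_mul] at this
    have hs : l * τ ≤ R⁻¹ := by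
      rw [← le_div_iff₀ hτ0, div_eq_mul_inv, ← mul_inv]
      exact hl.2
    rw [← inv_pow]
    exact (shrinkage_le_sq _).trans (pow_le_pow_left₀ (mul_nonneg hl.1.le hτ0.le) hs 2)
  have hmid : -(R * τ * exp (y ^ 2 / 2 * (1 / 2))) ≤
      ∫ l in Ioc (R * τ)⁻¹ τ⁻¹, selectionIntegrand τ y l := by
    refine le_trans ?_ (neg_mul_exp_le_setIntegral_Ioc_selectionIntegrand (r := 1 / 2) y
      fun l hl => ?_)
    · gcongr -(?_ * _)
      simpa using integral_Ioi_halfCauchyPDF_le (a := (R * τ)⁻¹) (by positivity)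
    · have hl0 : 0 < l := lt_trans (by positivity) hl.1
      exact (shrinkage_le_half_iff (by positivity)).2
        ((le_mul_inv_iff₀ hτ0).1 (by simpa using hl.2))
  have htail := le_setIntegral_Ioi_selectionIntegrand y hτ0 hτ1 hR
  rw [isSelected_iff_integral_pos hτ0 hy, setIntegral_Ioi_eq_add_add
    (integrable_selectionIntegrand τ y).integrableOn (by positivity) hRτ]
  linarith

end Threshold

section Asymptotics

lemma zet_nonneg (τ : ℝ) : 0 ≤ zet τ := sqrt_nonneg _

lemma zet_sq {τ : ℝ} (hτ0 : 0 < τ) (hτ1 : τ ≤ 1) : zet τ ^ 2 = -2 * log τ := by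
  have := log_nonpos hτ0.le hτ1
  rw [zet, one_div, log_inv, sq_sqrt] <;> linarith

lemma exp_neg_zet_sq_div_two_le {γ : ℝ} (hγ : 0 < γ) : exp (-zet γ ^ 2 / 2) ≤ γ := by
  rw [← le_log_iff_exp_le hγ, zet, one_div, log_inv, sq_sqrt']
  linarith [le_max_left (2 * -log γ) 0]

lemma tendsto_zet : Tendsto zet (nhdsWithin 0 (Ioi 0)) atTop := by
  have hlog : Tendsto (fun τ : ℝ => log (1 / τ)) (nhdsWithin 0 (Ioi 0)) atTop := by
    simpa [Function.comp_def] using tendsto_log_atTop.comp tendsto_inv_nhdsGT_zero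
  exact tendsto_sqrt_atTop.comp (hlog.const_mul_atTop two_pos)

lemma exp_neg_sq_div_two_mul_le_rpow {τ y k b : ℝ} (hτ0 : 0 < τ) (hτ1 : τ ≤ 1) (hk : 0 ≤ k)
    (hb : 0 ≤ b) (hy : k * zet τ ≤ |y|) : exp (-(y ^ 2 / 2 * b)) ≤ τ ^ (k ^ 2 * b) := by
  have hsq : k ^ 2 * zet τ ^ 2 ≤ y ^ 2 := by
    rw [← mul_pow, ← sq_abs y]
    exact pow_le_pow_left₀ (mul_nonneg hk (zet_nonneg τ)) hy 2
  rw [zet_sq hτ0 hτ1] at hsq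
  rw [rpow_def_of_pos hτ0, exp_le_exp]
  nlinarith

lemma exp_sq_div_two_le_rpow {τ y k : ℝ} (hτ0 : 0 < τ) (hτ1 : τ ≤ 1)
    (hy : |y| ≤ k * zet τ) : exp (y ^ 2 / 2) ≤ τ ^ (-k ^ 2) := by
  have hsq : y ^ 2 ≤ k ^ 2 * zet τ ^ 2 := by
    rw [← mul_pow, ← sq_abs y]
    exact pow_le_pow_left₀ (abs_nonneg y) hy 2
  rw [zet_sq hτ0 hτ1] at hsq
  rw [rpow_def_of_pos hτ0, exp_le_exp]
  linarith

lemma tendsto_rpow_nhdsGT_zero {b : ℝ} (hb : 0 < b) :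
    Tendsto (fun τ : ℝ => τ ^ b) (nhdsWithin 0 (Ioi 0)) (nhds 0) := by
  simpa [zero_rpow hb.ne'] using
    ((continuousAt_rpow_const 0 b (.inr hb.le)).tendsto).mono_left nhdsWithin_le_nhds

lemma eventually_not_isSelected {k : ℝ} (hk0 : 0 ≤ k) (hk : k < 1) :
    ∀ᶠ τ in nhdsWithin 0 (Ioi 0), ∀ y, |y| ≤ k * zet τ → ¬ IsSelected τ y := by
  have hlim := tendsto_rpow_nhdsGT_zero (b := 1 - k ^ 2) (by nlinarith)
  filter_upwards [hlim.eventually_le_const (by norm_num : (0 : ℝ) < 1 / 10),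
    Ioc_mem_nhdsGT (by norm_num : (0 : ℝ) < 1 / 2)] with τ hsmall ⟨hτ0, hτ⟩ y hy
  refine not_isSelected_of_exp_mul_le hτ0 hτ ?_
  calc exp (y ^ 2 / 2) * τ ≤ τ ^ (-k ^ 2) * τ ^ (1 : ℝ) := by
        rw [rpow_one]
        gcongr
        exact exp_sq_div_two_le_rpow hτ0 (by linarith) hy
    _ = τ ^ (1 - k ^ 2) := by rw [← rpow_add hτ0]; ring_nf
    _ ≤ 1 / 10 := hsmall

lemma exists_two_le_lt_mul_one_sub_inv_sq {k : ℝ} (hk : 1 < k) :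
    ∃ R, 2 ≤ R ∧ 1 < k ^ 2 * (1 - 2 * (R ^ 2)⁻¹) := by
  have hlim : Tendsto (fun R : ℝ => k ^ 2 * (1 - 2 * (R ^ 2)⁻¹)) atTop (nhds (k ^ 2)) := by
    have hinv := tendsto_inv_atTop_zero.comp (tendsto_pow_atTop (α := ℝ) two_ne_zero)
    simpa using ((hinv.const_mul 2).const_sub 1).const_mul (k ^ 2)
  exact ((eventually_ge_atTop 2).and (hlim.eventually_const_lt (by nlinarith))).exists

lemma eventually_isSelected {k : ℝ} (hk : 1 < k) :
    ∀ᶠ τ in nhdsWithin 0 (Ioi 0), ∀ y, k * zet τ ≤ |y| → IsSelected τ y := by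
  obtain ⟨R, hR, hkR⟩ := exists_two_le_lt_mul_one_sub_inv_sq hk
  set b := 1 - 2 * (R ^ 2)⁻¹
  set C := 1 / 4 * ((1 + (R + 1) ^ 2)⁻¹) ^ 2
  have hb : 0 < b := pos_of_mul_pos_right (zero_lt_one.trans hkR) (sq_nonneg k)
  have hlim : Tendsto (fun τ : ℝ => τ ^ (k ^ 2 * b - 1) + R * τ ^ (k ^ 2 * (b / 2)))
      (nhdsWithin 0 (Ioi 0)) (nhds 0) := by
    simpa using (tendsto_rpow_nhdsGT_zero (sub_pos.2 hkR)).add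
      ((tendsto_rpow_nhdsGT_zero (b := k ^ 2 * (b / 2)) (by positivity)).const_mul R)
  filter_upwards [hlim.eventually_lt_const (by positivity : 0 < C),
    Ioo_mem_nhdsGT zero_lt_one, tendsto_zet.eventually_gt_atTop 0] with τ hsmall ⟨hτ0, hτ1⟩ hz y hy
  have hy0 : y ≠ 0 := abs_pos.1 (lt_of_lt_of_le (by positivity) hy)
  have hexp : exp (-(y ^ 2 / 2 * b)) + R * τ * exp (-(y ^ 2 / 2 * (b / 2))) < τ * C :=
    calc exp (-(y ^ 2 / 2 * b)) + R * τ * exp (-(y ^ 2 / 2 * (b / 2)))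
      _ ≤ τ ^ (k ^ 2 * b) + R * τ * τ ^ (k ^ 2 * (b / 2)) := by
        gcongr <;> exact exp_neg_sq_div_two_mul_le_rpow hτ0 hτ1.le (by linarith) (by linarith) hy
      _ = τ * (τ ^ (k ^ 2 * b - 1) + R * τ ^ (k ^ 2 * (b / 2))) := by
        rw [rpow_sub_one hτ0.ne']
        field_simp
      _ < τ * C := by gcongr
  have hscale := mul_lt_mul_of_pos_right hexp (exp_pos (y ^ 2 / 2 * (1 - (R ^ 2)⁻¹)))
  rw [add_mul, mul_assoc (R * τ), ← exp_add, ← exp_add,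
    show -(y ^ 2 / 2 * b) + y ^ 2 / 2 * (1 - (R ^ 2)⁻¹) = y ^ 2 / 2 * (R ^ 2)⁻¹ by ring,
    show -(y ^ 2 / 2 * (b / 2)) + y ^ 2 / 2 * (1 - (R ^ 2)⁻¹) = y ^ 2 / 2 * (1 / 2) by ring,
    show τ * C = τ / 4 * ((1 + (R + 1) ^ 2)⁻¹) ^ 2 by ring] at hscale
  exact isSelected_of_lt hτ0 hτ1.le hy0 hR hscale

lemma eventually_gaussianReal_isSelected_le {k d : ℝ} (hk : 0 ≤ k) (hd : 0 ≤ d) (hkd : k + d < 1) :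
    ∀ᶠ τ in nhdsWithin 0 (Ioi 0), ∀ m, |m| ≤ k * zet τ →
      gaussianReal m 1 {x | IsSelected τ x} ≤ ENNReal.ofReal (2 * exp (-(d * zet τ) ^ 2 / 2)) := by
  filter_upwards [eventually_not_isSelected (add_nonneg hk hd) hkd] with τ hτ m hm
  refine (measure_mono fun x (hx : IsSelected τ x) => ?_).trans
    (by simpa using gaussianReal_le_abs_sub_le m 1 (mul_nonneg hd (zet_nonneg τ)))
  have hfar : (k + d) * zet τ < |x| := not_le.1 fun h => hτ x h hx
  have htri : |x| ≤ |m| + |x - m| := by simpa using abs_add_le m (x - m)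
  exact (by linarith : d * zet τ ≤ |x - m|)

lemma eventually_gaussianReal_not_isSelected_le {k d : ℝ} (hd : 0 ≤ d) (hkd : 1 < k - d) :
    ∀ᶠ τ in nhdsWithin 0 (Ioi 0), ∀ m, k * zet τ ≤ |m| →
      gaussianReal m 1 {x | ¬ IsSelected τ x} ≤
        ENNReal.ofReal (2 * exp (-(d * zet τ) ^ 2 / 2)) := by
  filter_upwards [eventually_isSelected hkd] with τ hτ m hm
  refine (measure_mono fun x (hx : ¬ IsSelected τ x) => ?_).trans
    (by simpa using gaussianReal_le_abs_sub_le m 1 (mul_nonneg hd (zet_nonneg τ)))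
  have hnear : |x| < (k - d) * zet τ := not_le.1 fun h => hx (hτ x h)
  have htri : |m| ≤ |x| + |x - m| := by simpa using abs_sub x (x - m)
  exact (by linarith : d * zet τ ≤ |x - m|)

lemma eventually_mul_le_mul_zet (c : ℝ) {k : ℝ} (hk : 0 < k) :
    ∀ᶠ τ in nhdsWithin 0 (Ioi 0), c * τ ≤ k * zet τ := by
  have hlim : Tendsto (fun τ : ℝ => c * τ) (nhdsWithin 0 (Ioi 0)) (nhds 0) :=
    tendsto_nhdsWithin_of_tendsto_nhds ((continuous_const_mul c).tendsto' 0 0 (mul_zero c))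
  filter_upwards [hlim.eventually_le_const zero_lt_one,
    (tendsto_zet.const_mul_atTop hk).eventually_ge_atTop 1] with τ h1 h2 using h1.trans h2

variable {α : Type*} {l : Filter α} {τ γ : α → ℝ}

lemma tendsto_exp_neg_mul_zet_sq {d : ℝ} (hd : 0 < d)
    (hτ : Tendsto τ l (nhdsWithin 0 (Ioi 0))) :
    Tendsto (fun a => 2 * exp (-(d * zet (τ a)) ^ 2 / 2)) l (nhds 0) := by
  have hz : Tendsto (fun a => (d * zet (τ a)) ^ 2 / 2) l atTop :=
    ((tendsto_pow_atTop two_ne_zero).comp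
      ((tendsto_zet.comp hτ).const_mul_atTop hd)).atTop_div_const two_pos
  simpa [neg_div] using (tendsto_exp_neg_atTop_nhds_zero.comp hz).const_mul 2

lemma tendsto_exp_neg_mul_zet_sq_div {d : ℝ} (hd : 0 < d)
    (hτ : Tendsto τ l (nhdsWithin 0 (Ioi 0))) (hγ : ∀ᶠ a in l, 0 < γ a)
    (hzet : (fun a => zet (γ a)) =o[l] fun a => zet (τ a)) :
    Tendsto (fun a => 2 * exp (-(d * zet (τ a)) ^ 2 / 2) / γ a) l (nhds 0) := by
  refine tendsto_of_tendsto_of_tendsto_of_le_of_le' tendsto_const_nhds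
    (tendsto_exp_neg_mul_zet_sq (half_pos hd) hτ) ?_ ?_
  · filter_upwards [hγ] with a ha
    positivity
  · filter_upwards [hγ, hzet.bound (half_pos hd)] with a ha hle
    rw [norm_of_nonneg (zet_nonneg _), norm_of_nonneg (zet_nonneg _)] at hle
    have hsq := pow_le_pow_left₀ (zet_nonneg _) hle 2
    rw [div_le_iff₀ ha]
    calc 2 * exp (-(d * zet (τ a)) ^ 2 / 2)
      _ ≤ 2 * exp (-(d / 2 * zet (τ a)) ^ 2 / 2 + -zet (γ a) ^ 2 / 2) := by
        gcongr
        nlinarith [sq_nonneg (d * zet (τ a))]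
      _ = 2 * exp (-(d / 2 * zet (τ a)) ^ 2 / 2) * exp (-zet (γ a) ^ 2 / 2) := by
        rw [exp_add, mul_assoc]
      _ ≤ 2 * exp (-(d / 2 * zet (τ a)) ^ 2 / 2) * γ a := by
        gcongr
        exact exp_neg_zet_sq_div_two_le ha

end Asymptotics

section Consistency

variable {α : Type*} {l : Filter α} {N : α → ℕ} {θ₀ : ∀ a, Fin (N a) → ℝ} {τ γ : α → ℝ} {k : ℝ}

theorem tendsto_Pdata_ncard_not_isSelected (hk0 : 0 ≤ k) (hk : k < 1)
    (hτ : Tendsto τ l (nhdsWithin 0 (Ioi 0))) (hγ : ∀ᶠ a in l, 0 < γ a)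
    (hzet : (fun a => zet (γ a)) =o[l] fun a => zet (τ a)) {J : ∀ a, Set (Fin (N a))}
    (hJ : ∀ᶠ a in l, ∀ i ∈ J a, |θ₀ a i| ≤ k * zet (τ a)) :
    Tendsto (fun a => Pdata (θ₀ a) {y | (1 - γ a) * (J a).ncard ≤
      ({i | i ∈ J a ∧ ¬ IsSelected (τ a) (y i)}.ncard : ℝ)}) l (nhds 1) := by
  obtain ⟨d, hd0, hkd⟩ : ∃ d, 0 < d ∧ k + d < 1 := ⟨(1 - k) / 2, by linarith, by linarith⟩
  refine tendsto_measure_one_sub_mul_ncard_le (μ := fun a => Pdata (θ₀ a)) J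
    (G := fun a i => {y | ¬ IsSelected (τ a) (y i)}) hγ ?_
    (tendsto_exp_neg_mul_zet_sq_div hd0 hτ hγ hzet)
  filter_upwards [hτ.eventually (eventually_gaussianReal_isSelected_le hk0 hd0.le hkd), hJ]
    with a ha hJa i hi
  rw [compl_ofPred]
  simp_rw [not_not]
  exact (Pdata_setOf_apply_mem_le (θ₀ a) i {x | IsSelected (τ a) x}).trans (ha _ (hJa i hi))

theorem tendsto_Pdata_ncard_isSelected (hk : 1 < k)
    (hτ : Tendsto τ l (nhdsWithin 0 (Ioi 0))) (hγ : ∀ᶠ a in l, 0 < γ a)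
    (hzet : (fun a => zet (γ a)) =o[l] fun a => zet (τ a)) {J : ∀ a, Set (Fin (N a))}
    (hJ : ∀ᶠ a in l, ∀ i ∈ J a, k * zet (τ a) ≤ |θ₀ a i|) :
    Tendsto (fun a => Pdata (θ₀ a) {y | (1 - γ a) * (J a).ncard ≤
      ({i | i ∈ J a ∧ IsSelected (τ a) (y i)}.ncard : ℝ)}) l (nhds 1) := by
  obtain ⟨d, hd0, hkd⟩ : ∃ d, 0 < d ∧ 1 < k - d := ⟨(k - 1) / 2, by linarith, by linarith⟩
  refine tendsto_measure_one_sub_mul_ncard_le (μ := fun a => Pdata (θ₀ a)) J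
    (G := fun a i => {y | IsSelected (τ a) (y i)}) hγ ?_
    (tendsto_exp_neg_mul_zet_sq_div hd0 hτ hγ hzet)
  filter_upwards [hτ.eventually (eventually_gaussianReal_not_isSelected_le hd0.le hkd), hJ]
    with a ha hJa i hi
  exact (Pdata_setOf_apply_mem_le (θ₀ a) i {x | ¬ IsSelected (τ a) x}).trans (ha _ (hJa i hi))

theorem tendsto_Pdata_not_isSelected (hk0 : 0 ≤ k) (hk : k < 1)
    (hτ : Tendsto τ l (nhdsWithin 0 (Ioi 0))) {i : ∀ a, Fin (N a)}
    (hi : ∀ᶠ a in l, |θ₀ a (i a)| ≤ k * zet (τ a)) :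
    Tendsto (fun a => Pdata (θ₀ a) {y | ¬ IsSelected (τ a) (y (i a))}) l (nhds 1) := by
  obtain ⟨d, hd0, hkd⟩ : ∃ d, 0 < d ∧ k + d < 1 := ⟨(1 - k) / 2, by linarith, by linarith⟩
  have hlim := ENNReal.tendsto_ofReal (tendsto_exp_neg_mul_zet_sq hd0 hτ)
  rw [ENNReal.ofReal_zero] at hlim
  refine tendsto_measure_one_of_tendsto_compl
    (tendsto_of_tendsto_of_tendsto_of_le_of_le' tendsto_const_nhds hlim
      (.of_forall fun _ => zero_le) ?_)
  filter_upwards [hτ.eventually (eventually_gaussianReal_isSelected_le hk0 hd0.le hkd), hi]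
    with a ha hia
  simp_rw [compl_ofPred, not_not]
  exact (Pdata_setOf_apply_mem_le (θ₀ a) (i a) {x | IsSelected (τ a) x}).trans (ha _ hia)

theorem stmt_7_general {kM kL : ℝ} (kS : ℝ) (hkM : kM < 1) (hkL : 1 < kL)
    (hτ : Tendsto τ l (nhdsWithin 0 (Ioi 0))) (hγ : ∀ᶠ a in l, 0 < γ a)
    (hzet : (fun a => zet (γ a)) =o[l] fun a => zet (τ a)) (θ₀ : ∀ a, Fin (N a) → ℝ) :
    Tendsto (fun a => Pdata (θ₀ a) {y | (1 - γ a) * {i | θ₀ a i = 0}.ncard ≤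
      ({i | θ₀ a i = 0 ∧ ¬ IsSelected (τ a) (y i)}.ncard : ℝ)}) l (nhds 1) ∧
    Tendsto (fun a => Pdata (θ₀ a) {y | (1 - γ a) * {i | kL * zet (τ a) ≤ |θ₀ a i|}.ncard ≤
      ({i | kL * zet (τ a) ≤ |θ₀ a i| ∧ IsSelected (τ a) (y i)}.ncard : ℝ)}) l (nhds 1) ∧
    ∀ i : ∀ a, Fin (N a),
      (∀ᶠ a in l, |θ₀ a (i a)| ≤ kS * τ a ∨ |θ₀ a (i a)| ≤ kM * zet (τ a)) →
      Tendsto (fun a => Pdata (θ₀ a) {y | ¬ IsSelected (τ a) (y (i a))}) l (nhds 1) := by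
  refine ⟨tendsto_Pdata_ncard_not_isSelected le_rfl zero_lt_one hτ hγ hzet ?_,
    tendsto_Pdata_ncard_isSelected hkL hτ hγ hzet (.of_forall fun a i => id), fun i hi => ?_⟩
  · exact .of_forall fun a i (hi : θ₀ a i = 0) => by simp [hi]
  · have hmax : 0 < max kM (1 / 2) := lt_max_of_lt_right one_half_pos
    refine tendsto_Pdata_not_isSelected hmax.le (max_lt hkM one_half_lt_one) hτ ?_
    filter_upwards [hi, hτ.eventually (eventually_mul_le_mul_zet kS hmax)] with a ha hS
    rcases ha with ha | ha
    · exact ha.trans hS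
    · exact ha.trans (mul_le_mul_of_nonneg_right (le_max_left _ _) (zet_nonneg _))

end Consistency

theorem stmt_7
    (kS kM kL : ℝ) (hkS : 0 < kS) (hkM : kM < 1) (hkL : 1 < kL)
    (τ : ℕ → ℝ) (hτpos : ∀ n, 0 < τ n) (hτ : Tendsto τ atTop (nhds 0))
    (f : ℕ → ℝ) (hf : Tendsto f atTop atTop)
    (γ : ℕ → ℝ) (hγpos : ∀ n, 0 < γ n)
    (c : ℝ) (hc0 : 0 ≤ c) (hc : c ≤ 1 / 2) (hγ : Tendsto γ atTop (nhds c))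
    (hzet : (fun n => zet (γ n)) =o[atTop] fun n => zet (τ n))
    (θ₀ : (n : ℕ) → Fin (n + 1) → ℝ) :
    (Tendsto
      (fun n =>
        Pdata (θ₀ n)
          {y : Fin (n + 1) → ℝ |
            (1 - 2 * γ n) * (({i | θ₀ n i = 0} : Set (Fin (n + 1))).ncard : ℝ) ≤
              (({i | θ₀ n i = 0 ∧ ¬ 1 / 2 < postMean (τ n) (y i) / y i} : Set (Fin (n + 1))).ncard : ℝ)})
      atTop (nhds 1)) ∧
    (Tendsto
      (fun n =>
        Pdata (θ₀ n)
          {y : Fin (n + 1) → ℝ |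
            (1 - γ n) * (({i | kL * zet (τ n) ≤ |θ₀ n i|} : Set (Fin (n + 1))).ncard : ℝ) ≤ (({i | kL * zet (τ n) ≤ |θ₀ n i| ∧ 1 / 2 < postMean (τ n) (y i) / y i} : Set (Fin (n + 1))).ncard : ℝ)})
      atTop (nhds 1)) ∧
    (∀ i : (n : ℕ) → Fin (n + 1),
      (∀ n, θ₀ n (i n) ≠ 0 ∧
        (|θ₀ n (i n)| ≤ kS * τ n ∨
          (f n * τ n ≤ |θ₀ n (i n)| ∧ |θ₀ n (i n)| ≤ kM * zet (τ n)))) →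
      Tendsto
        (fun n =>
          Pdata (θ₀ n)
            {y : Fin (n + 1) → ℝ |
              ¬ 1 / 2 < postMean (τ n) (y (i n)) / y (i n)})
        atTop (nhds 1)) := by
  have hτ0 : Tendsto τ atTop (nhdsWithin 0 (Ioi 0)) :=
    tendsto_nhdsWithin_iff.2 ⟨hτ, .of_forall hτpos⟩
  obtain ⟨hnull, hlarge, hsmall⟩ :=
    stmt_7_general kS hkM hkL hτ0 (.of_forall hγpos) hzet θ₀
  refine ⟨tendsto_of_tendsto_of_tendsto_of_le_of_le hnull tendsto_const_nhds (fun n => ?_)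
    fun n => prob_le_one, hlarge, fun i hi => hsmall i ?_⟩
  · refine measure_mono (ofPred_subset_ofPred.2 fun y => le_trans ?_)
    gcongr
    linarith [hγpos n]
  · exact .of_forall fun n => (hi n).2.imp_right And.right

end
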